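/- Let q be a prime, let P(2,q) be the group of invertible upper-triangular 2×2 matrices over the field F_q, let U₀ ≤ P(2,q) be the subgroup of unipotent matrices (upper-triangular with both diagonal entries equal to 1) and let D ≤ P(2,q) be the subgroup of diagonal matrices. Then every subgroup U of P(2,q) is either of the form U = ⟨U₀, s⟩ (the subgroup generated by U₀ and s) for some subgroup s ≤ D, or of the form U = u s u⁻¹ (the conjugate of s by u) for some subgroup s ≤ D and some element u ∈ U₀. -/

import Mathlib

/-!
If `U` contains a transvection `unip x` with `x ≠ 0`, then it contains all of `U₀`, because `U₀` is
cyclic of prime order. Every element of `P(2,q)` is a product of an element of `U₀` and a diagonal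
matrix, so `U = U₀ ⊔ (U ⊓ D)`.

Otherwise `U ∩ U₀` is trivial, so an element of `U` is determined by its diagonal
(`eq_of_diag_eq`). Comparing `g * h` with `h * g` shows that `U` is abelian, and comparing `g ^ q`
with `g` shows that an element of `U` with equal diagonal entries is scalar. Together these give a
single `t` such that every `g ∈ U` satisfies `g₀₁ = t * (g₀₀ - g₁₁)` (`exists_slope`); this equation
says exactly that conjugation by `unip t` makes `g` diagonal.
-/

def P2 (q : ℕ) [Fact q.Prime] :
    Subgroup (Matrix.GeneralLinearGroup (Fin 2) (ZMod q)) where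
  carrier := {M | (M : Matrix (Fin 2) (Fin 2) (ZMod q)) 1 0 = 0}
  one_mem' := by simp [Matrix.one_apply]
  mul_mem' := by
    intro a b ha hb
    simp only [Set.mem_setOf_eq] at *
    simp [Matrix.mul_apply, Fin.sum_univ_two, ha, hb]
  inv_mem' := by
    intro a ha
    simp only [Set.mem_setOf_eq] at *
    rw [Matrix.coe_units_inv, Matrix.inv_def, Matrix.adjugate_fin_two]
    simp [ha]

/-- The matrix entries of an element of `P(2,q)`. -/
def ent {q : ℕ} [Fact q.Prime] (u : ↥(P2 q)) (i j : Fin 2) : ZMod q :=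
  ((u : Matrix.GeneralLinearGroup (Fin 2) (ZMod q)) : Matrix (Fin 2) (Fin 2) (ZMod q)) i j

/-- The subgroup of unipotent upper triangular matrices in `P(2,q)`. -/
def U0 (q : ℕ) [Fact q.Prime] : Subgroup ↥(P2 q) where
  carrier := {u | ent u 0 0 = 1 ∧ ent u 1 1 = 1}
  one_mem' := by constructor <;> simp [ent, Matrix.one_apply]
  mul_mem' := by
    rintro a b ⟨ha1, ha2⟩ ⟨hb1, hb2⟩
    have hb0 : ent b 1 0 = 0 := b.2
    have ha0 : ent a 1 0 = 0 := a.2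
    constructor <;>
      simp_all [ent, Matrix.mul_apply, Fin.sum_univ_two]
  inv_mem' := by
    rintro a ⟨ha1, ha2⟩
    have ha0 : ent a 1 0 = 0 := a.2
    simp only [ent, Set.mem_setOf_eq] at *
    have : ((((a : ↥(P2 q))⁻¹ : ↥(P2 q)) : Matrix.GeneralLinearGroup (Fin 2) (ZMod q)) :
        Matrix (Fin 2) (Fin 2) (ZMod q)) =
        (((a : Matrix.GeneralLinearGroup (Fin 2) (ZMod q)) :
          Matrix (Fin 2) (Fin 2) (ZMod q)))⁻¹ := by
      rw [← Matrix.coe_units_inv]; norm_cast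
    rw [this, Matrix.inv_def, Matrix.adjugate_fin_two, Matrix.det_fin_two]
    constructor <;> simp [ha0, ha1, ha2]

/-- The subgroup of diagonal matrices in `P(2,q)`. -/
def DiagSub (q : ℕ) [Fact q.Prime] : Subgroup ↥(P2 q) where
  carrier := {u | ent u 0 1 = 0}
  one_mem' := by simp [ent, Matrix.one_apply]
  mul_mem' := by
    intro a b ha hb
    simp only [ent, Set.mem_setOf_eq] at *
    simp [Matrix.mul_apply, Fin.sum_univ_two, ha, hb]
  inv_mem' := by
    intro a ha
    simp only [ent, Set.mem_setOf_eq] at *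
    have : ((((a : ↥(P2 q))⁻¹ : ↥(P2 q)) : Matrix.GeneralLinearGroup (Fin 2) (ZMod q)) :
        Matrix (Fin 2) (Fin 2) (ZMod q)) =
        (((a : Matrix.GeneralLinearGroup (Fin 2) (ZMod q)) :
          Matrix (Fin 2) (Fin 2) (ZMod q)))⁻¹ := by
      rw [← Matrix.coe_units_inv]; norm_cast
    rw [this, Matrix.inv_def, Matrix.adjugate_fin_two]
    simp [ha]

section

variable {q : ℕ} [Fact q.Prime]

lemma ent_ten (g : ↥(P2 q)) : ent g 1 0 = 0 := g.2

lemma ent_mul (g h : ↥(P2 q)) (i j : Fin 2) :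
    ent (g * h) i j = ent g i 0 * ent h 0 j + ent g i 1 * ent h 1 j := by
  simp [ent, Matrix.mul_apply, Fin.sum_univ_two]

lemma ent_one (i j : Fin 2) :
    ent (1 : ↥(P2 q)) i j = (1 : Matrix (Fin 2) (Fin 2) (ZMod q)) i j := by
  simp [ent]

lemma P2_ext {g h : ↥(P2 q)} (h00 : ent g 0 0 = ent h 0 0) (h01 : ent g 0 1 = ent h 0 1)
    (h11 : ent g 1 1 = ent h 1 1) : g = h := by
  apply Subtype.ext
  apply Units.ext
  ext i j
  fin_cases i <;> fin_cases j
  · exact h00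
  · exact h01
  · exact (ent_ten g).trans (ent_ten h).symm
  · exact h11

lemma ent_diag_ne_zero (g : ↥(P2 q)) : ent g 0 0 ≠ 0 ∧ ent g 1 1 ≠ 0 := by
  have h0 := ent_mul g g⁻¹ 0 0
  have h1 := ent_mul g g⁻¹ 1 1
  rw [mul_inv_cancel, ent_one] at h0 h1
  simp only [ent_ten, Matrix.one_apply_eq] at h0 h1
  constructor <;> intro hz <;> simp [hz] at h0 h1

/-- The transvection with ones on the diagonal and upper right entry `x`. -/
def unip (x : ZMod q) : ↥(P2 q) :=
  ⟨⟨!![1, x; 0, 1], !![1, -x; 0, 1], by simp [Matrix.one_fin_two], by simp [Matrix.one_fin_two]⟩,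
    by change (!![1, x; 0, 1] : Matrix (Fin 2) (Fin 2) (ZMod q)) 1 0 = 0; simp⟩

lemma ent_unip (x : ZMod q) : ent (unip x) 0 0 = 1 ∧ ent (unip x) 0 1 = x ∧
    ent (unip x) 1 1 = 1 := by
  simp [ent, unip]

lemma unip_mem (x : ZMod q) : unip x ∈ U0 q := ⟨(ent_unip x).1, (ent_unip x).2.2⟩

lemma eq_unip {u : ↥(P2 q)} (hu : u ∈ U0 q) : u = unip (ent u 0 1) := by
  obtain ⟨h0, h1, h2⟩ := ent_unip (ent u 0 1)
  exact P2_ext (hu.1.trans h0.symm) h1.symm (hu.2.trans h2.symm)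

lemma ent_unip_mul (x : ZMod q) (g : ↥(P2 q)) : ent (unip x * g) 0 0 = ent g 0 0 ∧
    ent (unip x * g) 0 1 = ent g 0 1 + x * ent g 1 1 ∧ ent (unip x * g) 1 1 = ent g 1 1 := by
  obtain ⟨h0, h1, h2⟩ := ent_unip x
  simp [ent_mul, ent_ten, h0, h1, h2]

lemma unip_add (x y : ZMod q) : unip (x + y) = unip x * unip y := by
  obtain ⟨a0, a1, a2⟩ := ent_unip_mul x (unip y)
  obtain ⟨b0, b1, b2⟩ := ent_unip y
  obtain ⟨c0, c1, c2⟩ := ent_unip (x + y)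
  apply P2_ext
  · rw [c0, a0, b0]
  · rw [c1, a1, b1, b2, mul_one, add_comm]
  · rw [c2, a2, b2]

lemma unip_zero : unip (0 : ZMod q) = 1 :=
  left_eq_mul.mp (show unip (0 : ZMod q) = unip 0 * unip 0 by rw [← unip_add, add_zero])

lemma unip_neg (x : ZMod q) : unip (-x) = (unip x)⁻¹ :=
  eq_inv_of_mul_eq_one_left (by rw [← unip_add, neg_add_cancel, unip_zero])

lemma unip_natCast_mul (x : ZMod q) (n : ℕ) : unip ((n : ZMod q) * x) = unip x ^ n := by
  induction n with
  | zero => simp [unip_zero]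
  | succ n ih => rw [pow_succ, ← ih, ← unip_add]; congr 1; push_cast; ring

/-- `U₀` has prime order, so it lies in every subgroup that meets it nontrivially. -/
lemma U0_le {U : Subgroup ↥(P2 q)} {x : ZMod q} (hx : x ≠ 0) (hxU : unip x ∈ U) :
    U0 q ≤ U := by
  intro u hu
  rw [eq_unip hu]
  have key : unip (ent u 0 1) = unip x ^ (ent u 0 1 / x).val := by
    rw [← unip_natCast_mul, ZMod.natCast_zmod_val, div_mul_cancel₀ _ hx]
  rw [key]
  exact pow_mem hxU _

/-- If `U` meets `U₀` trivially, an element of `U` is determined by its diagonal. -/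
lemma eq_of_diag_eq {U : Subgroup ↥(P2 q)} (hU : ∀ x, unip x ∈ U → x = 0) {g h : ↥(P2 q)}
    (hg : g ∈ U) (hh : h ∈ U) (h0 : ent g 0 0 = ent h 0 0) (h1 : ent g 1 1 = ent h 1 1) :
    g = h := by
  obtain ⟨a0, a1, a2⟩ := ent_unip_mul ((ent g 0 1 - ent h 0 1) / ent h 1 1) h
  have key : g = unip ((ent g 0 1 - ent h 0 1) / ent h 1 1) * h := by
    apply P2_ext
    · rw [a0, h0]
    · rw [a1, div_mul_cancel₀ _ (ent_diag_ne_zero h).2]; ring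
    · rw [a2, h1]
  have hz := hU _ (by rw [eq_mul_inv_of_mul_eq key.symm]; exact mul_mem hg (inv_mem hh))
  rw [key, hz, unip_zero, one_mul]

/-- Powers of a triangular matrix with equal diagonal entries `a`. The formula for the upper right
entry is multiplied by `a` to avoid the exponent `n - 1`. -/
lemma ent_pow {g : ↥(P2 q)} (hg : ent g 0 0 = ent g 1 1) (n : ℕ) :
    ent (g ^ n) 0 0 = ent g 1 1 ^ n ∧ ent (g ^ n) 1 1 = ent g 1 1 ^ n ∧
      ent g 1 1 * ent (g ^ n) 0 1 = n * ent g 1 1 ^ n * ent g 0 1 := by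
  induction n with
  | zero => simp [ent_one]
  | succ n ih =>
    obtain ⟨i0, i1, i2⟩ := ih
    simp only [pow_succ, ent_mul, ent_ten, hg, i0, i1]
    refine ⟨by ring, by ring, ?_⟩
    push_cast
    linear_combination ent g 1 1 * i2

lemma exists_slope {U : Subgroup ↥(P2 q)} (hU : ∀ x, unip x ∈ U → x = 0) :
    ∃ t, ∀ g ∈ U, ent g 0 1 = t * (ent g 0 0 - ent g 1 1) := by
  by_cases hs : ∀ g ∈ U, ent g 0 0 = ent g 1 1
  · refine ⟨0, fun g hg => ?_⟩
    obtain ⟨p0, p1, p2⟩ := ent_pow (hs g hg) q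
    -- By Fermat, `g ^ q` and `g` have the same diagonal.
    have hpow : g ^ q = g := eq_of_diag_eq hU (pow_mem hg q) hg
      (by rw [p0, ZMod.pow_card, hs g hg]) (by rw [p1, ZMod.pow_card])
    rw [hpow, ZMod.natCast_self, zero_mul, zero_mul] at p2
    rw [zero_mul]
    exact (mul_eq_zero.mp p2).resolve_left (ent_diag_ne_zero g).2
  · push Not at hs
    obtain ⟨g, hg, hne⟩ := hs
    refine ⟨ent g 0 1 / (ent g 0 0 - ent g 1 1), fun h hh => ?_⟩
    have hcomm : g * h = h * g := eq_of_diag_eq hU (mul_mem hg hh) (mul_mem hh hg)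
      (by simp only [ent_mul, ent_ten]; ring) (by simp only [ent_mul, ent_ten]; ring)
    have he : ent (g * h) 0 1 = ent (h * g) 0 1 := by rw [hcomm]
    rw [ent_mul, ent_mul] at he
    have hd : ent g 0 0 - ent g 1 1 ≠ 0 := sub_ne_zero.mpr hne
    rw [div_mul_eq_mul_div, eq_div_iff hd]
    linear_combination he

end

/-- **Proposition (classification of subgroups of `P(2,q)`).** Every subgroup
`U` of the group `P(2,q)` of invertible upper triangular `2 × 2` matrices over
`𝔽_q` is either generated by the unipotent subgroup `U₀` together with a
subgroup `s` of the diagonal subgroup `D`, or is a conjugate `u s u⁻¹` of a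
subgroup `s ≤ D` by an element `u ∈ U₀`. -/
theorem subgroup_classification_P2 (q : ℕ) [Fact q.Prime] (U : Subgroup ↥(P2 q)) :
    (∃ s : Subgroup ↥(P2 q), s ≤ DiagSub q ∧ U = U0 q ⊔ s) ∨
    (∃ s : Subgroup ↥(P2 q), s ≤ DiagSub q ∧ ∃ u ∈ U0 q,
      U = Subgroup.map (MulAut.conj u).toMonoidHom s) := by
  by_cases hU : ∀ x, unip x ∈ U → x = 0
  · right
    obtain ⟨t, ht⟩ := exists_slope hU
    refine ⟨U.map (MulAut.conj (unip t)).toMonoidHom, ?_, unip (-t), unip_mem _, ?_⟩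
    · rintro _ ⟨g, hg, rfl⟩
      change ent (unip t * g * (unip t)⁻¹) 0 1 = 0
      obtain ⟨a0, a1, a2⟩ := ent_unip_mul t g
      obtain ⟨b0, b1, b2⟩ := ent_unip (-t)
      rw [← unip_neg, ent_mul, a0, a1, b1, b2, ht g hg]
      ring
    · ext g
      constructor
      · exact fun hg => ⟨_, ⟨g, hg, rfl⟩, by simp [unip_neg, mul_assoc]⟩
      · rintro ⟨_, ⟨h, hh, rfl⟩, rfl⟩
        simpa [unip_neg, mul_assoc] using hh
  · left
    push Not at hU
    obtain ⟨x, hxU, hx⟩ := hU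
    have hle := U0_le hx hxU
    refine ⟨U ⊓ DiagSub q, inf_le_right, le_antisymm (fun g hg => ?_) (sup_le hle inf_le_left)⟩
    -- Clear the upper right entry of `g` by a row operation, which stays inside `U`.
    have hu : unip (-(ent g 0 1 / ent g 1 1)) ∈ U0 q := unip_mem _
    have hd : unip (-(ent g 0 1 / ent g 1 1)) * g ∈ U ⊓ DiagSub q := by
      refine ⟨mul_mem (hle hu) hg, ?_⟩
      change ent _ 0 1 = 0
      rw [(ent_unip_mul _ g).2.1, neg_mul, div_mul_cancel₀ _ (ent_diag_ne_zero g).2, add_neg_cancel]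
    rw [← inv_mul_cancel_left (unip (-(ent g 0 1 / ent g 1 1))) g]
    exact Subgroup.mul_mem_sup (inv_mem hu) hd
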